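/- arXiv:2306.05154 — 5 statements merged into one kernel-verified Lean document; each statement's English description precedes it below -/
import Mathlib

section
/- Let f₁, …, f_k be signomials on ℝⁿ_{>0} and set S(f₁, …, f_k) = ⋂_{i=1}^{k} f_i^{-1}(ℝ_{<0}). Then the actual negative normal cone is contained in the real tropicalization: Σ(f₁, …, f_k) ⊆ Trop(S(f₁, …, f_k)). -/
/-- A signomial on the positive orthant `ℝⁿ_{>0}`: a function
`x ↦ ∑_{μ ∈ supp} coeff μ * x ^ μ` with finite support and nonzero coefficients. -/
structure Signomial (n : ℕ) where
  supp : Finset (Fin n → ℝ)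
  coeff : (Fin n → ℝ) → ℝ
  coeff_ne_zero : ∀ μ ∈ supp, coeff μ ≠ 0
  coeff_eq_zero : ∀ μ ∉ supp, coeff μ = 0

namespace Signomial

variable {n : ℕ}

/-- The monomial `x^μ = ∏ i, x i ^ μ i` (real exponents). -/
noncomputable def mono (x μ : Fin n → ℝ) : ℝ := ∏ i, x i ^ μ i

/-- Evaluation of a signomial. -/
noncomputable def eval (f : Signomial n) (x : Fin n → ℝ) : ℝ :=
  ∑ μ ∈ f.supp, f.coeff μ * mono x μ

open Classical in
/-- Evaluation of the restriction `f_{|S}` of `f` to a set `S ⊆ ℝⁿ`. -/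
noncomputable def evalOn (f : Signomial n) (S : Set (Fin n → ℝ)) (x : Fin n → ℝ) : ℝ :=
  ∑ μ ∈ f.supp, if μ ∈ S then f.coeff μ * mono x μ else 0

/-- The Newton polytope `N(f) = conv(σ(f))`. -/
def newton (f : Signomial n) : Set (Fin n → ℝ) :=
  convexHull ℝ (f.supp : Set (Fin n → ℝ))

/-- Euclidean scalar product on `Fin n → ℝ`. -/
noncomputable def dot (v μ : Fin n → ℝ) : ℝ := ∑ i, v i * μ i

/-- The face `N(f)_v` of the Newton polytope cut out by `v`. -/
def faceAt (f : Signomial n) (v : Fin n → ℝ) : Set (Fin n → ℝ) :=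
  {μ ∈ f.newton | ∀ ν ∈ f.newton, dot v ν ≤ dot v μ}

/-- `F` is a (nonempty, exposed) face of the Newton polytope of `f`. -/
def IsFace (f : Signomial n) (F : Set (Fin n → ℝ)) : Prop :=
  F.Nonempty ∧ ∃ v, F = f.faceAt v

/-- The (outer) normal cone of a face `F` of `N(f)`. -/
def normalCone (f : Signomial n) (F : Set (Fin n → ℝ)) : Set (Fin n → ℝ) :=
  {v | F ⊆ f.faceAt v}

/-- The negative normal cone `N_f^- = {v | N(f)_v ∩ σ₋(f) ≠ ∅}`. -/
def negCone (f : Signomial n) : Set (Fin n → ℝ) :=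
  {v | ∃ μ ∈ f.supp, f.coeff μ < 0 ∧ μ ∈ f.faceAt v}

/-- The positive orthant `ℝⁿ_{>0}`. -/
def posOrth (n : ℕ) : Set (Fin n → ℝ) := {x | ∀ i, 0 < x i}

/-- `S(f) = f⁻¹(ℝ_{<0})` (inside the positive orthant). -/
def negSet₁ (f : Signomial n) : Set (Fin n → ℝ) :=
  {x ∈ posOrth n | f.eval x < 0}

/-- `S(f₁, …, f_k) = ⋂ᵢ fᵢ⁻¹(ℝ_{<0})` (inside the positive orthant). -/
def negSet {k : ℕ} (f : Fin k → Signomial n) : Set (Fin n → ℝ) :=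
  {x ∈ posOrth n | ∀ i, (f i).eval x < 0}

/-- The actual negative normal cone `Σ(f)` of a single signomial. -/
def actualNegCone₁ (f : Signomial n) : Set (Fin n → ℝ) :=
  {v | ∃ x ∈ posOrth n, f.evalOn (f.faceAt v) x < 0}

/-- The actual negative normal cone `Σ(f₁, …, f_k)`. -/
def actualNegCone {k : ℕ} (f : Fin k → Signomial n) : Set (Fin n → ℝ) :=
  {v | ∃ x ∈ posOrth n, ∀ i, (f i).evalOn ((f i).faceAt v) x < 0}

/-- The real tropicalization (logarithmic limit set) of `S ⊆ ℝⁿ_{>0}`: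
`w ∈ Trop(S)` iff there are sequences `x(m) ∈ S`, `t(m) ∈ (1,∞)` with `t(m) → ∞` and
`Log_{t(m)}(x(m)) → w`. -/
def trop (S : Set (Fin n → ℝ)) : Set (Fin n → ℝ) :=
  {w | ∃ (x : ℕ → Fin n → ℝ) (t : ℕ → ℝ),
    (∀ m, x m ∈ S) ∧ (∀ m, 1 < t m) ∧
    Filter.Tendsto t Filter.atTop Filter.atTop ∧
    Filter.Tendsto (fun m i => Real.log (x m i) / Real.log (t m))
      Filter.atTop (nhds w)}

open Classical in
/-- The support of the restriction `f_{|F}`, i.e. `σ(f) ∩ F`. -/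
noncomputable def restSupp (f : Signomial n) (F : Set (Fin n → ℝ)) : Finset (Fin n → ℝ) :=
  f.supp.filter (fun μ => μ ∈ F)

/-- Evaluation of the signomial with coefficient vector `c ∈ ℝ^A`. -/
noncomputable def evalVec (A : Finset (Fin n → ℝ)) (c : A → ℝ) (x : Fin n → ℝ) : ℝ :=
  ∑ μ : A, c μ * mono x (μ : Fin n → ℝ)

/-- The nonnegativity cone `P⁺_A ⊆ ℝ^A`. -/
def nonnegConeSet (A : Finset (Fin n → ℝ)) : Set (A → ℝ) :=
  {c | ∀ x ∈ posOrth n, 0 ≤ evalVec A c x}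

/-- The coefficient vector of `f` viewed in `ℝ^A`. -/
def coeffVec (f : Signomial n) (A : Finset (Fin n → ℝ)) : A → ℝ :=
  fun μ => f.coeff μ

/-- The non-boundary condition (NB): for every face `F` of `N(f)`, if `f_{|F}` is
nonnegative on the positive orthant then it lies in the interior of the nonnegativity
cone `P⁺_{σ(f) ∩ F}`. -/
def NBcond (f : Signomial n) : Prop :=
  ∀ F : Set (Fin n → ℝ), f.IsFace F →
    coeffVec f (f.restSupp F) ∈ nonnegConeSet (f.restSupp F) →
    coeffVec f (f.restSupp F) ∈ interior (nonnegConeSet (f.restSupp F))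

end Signomial

namespace Signomial

theorem mono_shift {n : ℕ} (x v μ : Fin n → ℝ) (hx : x ∈ posOrth n) (t : ℝ) (ht : 0 < t) :
    mono (fun i => x i * t ^ v i) μ = mono x μ * t ^ dot v μ := by
  unfold mono dot
  rw [Real.rpow_sum_of_pos ht, ← Finset.prod_mul_distrib]
  refine Finset.prod_congr rfl fun i _ => ?_
  rw [Real.mul_rpow (hx i).le (Real.rpow_nonneg ht.le _), Real.rpow_mul ht.le]

theorem eventually_neg {n : ℕ} (f : Signomial n) (x v : Fin n → ℝ) (hx : x ∈ posOrth n)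
    (h : f.evalOn (f.faceAt v) x < 0) :
    ∀ᶠ t : ℝ in Filter.atTop, f.eval (fun i => x i * t ^ v i) < 0 := by
  classical
  obtain ⟨μ₀, -, hμ₀⟩ : ∃ μ ∈ f.supp, μ ∈ f.faceAt v := by
    by_contra hne
    push Not at hne
    have : f.evalOn (f.faceAt v) x = 0 := by
      unfold evalOn
      exact Finset.sum_eq_zero fun μ hμ => if_neg (hne μ hμ)
    linarith
  have hlim : Filter.Tendsto
      (fun t : ℝ => ∑ μ ∈ f.supp, f.coeff μ * mono x μ * t ^ (dot v μ - dot v μ₀))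
      Filter.atTop (nhds (f.evalOn (f.faceAt v) x)) := by
    unfold evalOn
    refine tendsto_finsetSum _ fun μ hμ => ?_
    have hμN : μ ∈ f.newton := subset_convexHull ℝ _ hμ
    have hle := hμ₀.2 μ hμN
    split_ifs with hf
    · have he : dot v μ - dot v μ₀ = 0 := by
        have := hf.2 μ₀ hμ₀.1
        linarith
      simp [he]
    · have hlt : dot v μ < dot v μ₀ := by
        refine lt_of_le_of_ne hle fun he => hf ⟨hμN, fun ν hν => ?_⟩
        rw [he]
        exact hμ₀.2 ν hν
      have := (tendsto_rpow_neg_atTop (sub_pos.2 hlt)).const_mul (f.coeff μ * mono x μ)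
      simpa using this
  filter_upwards [hlim.eventually (gt_mem_nhds h), Filter.eventually_gt_atTop 0] with t ht ht0
  have key : f.eval (fun i => x i * t ^ v i) =
      (∑ μ ∈ f.supp, f.coeff μ * mono x μ * t ^ (dot v μ - dot v μ₀)) * t ^ dot v μ₀ := by
    unfold eval
    rw [Finset.sum_mul]
    refine Finset.sum_congr rfl fun μ _ => ?_
    rw [mono_shift x v μ hx t ht0, mul_assoc (f.coeff μ * mono x μ), ← Real.rpow_add ht0,
      sub_add_cancel, mul_assoc]
  rw [key]
  exact mul_neg_of_neg_of_pos ht (Real.rpow_pos_of_pos ht0 _)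

end Signomial

open Signomial in
/-- `Σ(f₁, …, f_k) ⊆ Trop(S(f₁, …, f_k))`. -/
theorem actualNegCone_subset_trop {n k : ℕ} (f : Fin k → Signomial n) :
    actualNegCone f ⊆ trop (negSet f) := by
  rintro v ⟨x, hx, hneg⟩
  have hev : ∀ᶠ t : ℝ in Filter.atTop, ∀ i, (f i).eval (fun j => x j * t ^ v j) < 0 :=
    Filter.eventually_all.2 fun i => eventually_neg (f i) x v hx (hneg i)
  obtain ⟨T, hT⟩ := Filter.eventually_atTop.1 (hev.and (Filter.eventually_gt_atTop 1))
  have ht : Filter.Tendsto (fun m : ℕ => T + (m : ℝ)) Filter.atTop Filter.atTop :=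
    Filter.tendsto_atTop_add_const_left _ _ tendsto_natCast_atTop_atTop
  have hT' : ∀ m : ℕ, T ≤ T + (m : ℝ) := fun m => by simp
  have h1 : ∀ m : ℕ, 1 < T + (m : ℝ) := fun m => (hT _ (hT' m)).2
  have h0 : ∀ m : ℕ, 0 < T + (m : ℝ) := fun m => zero_lt_one.trans (h1 m)
  refine ⟨fun m i => x i * (T + (m : ℝ)) ^ v i, fun m => T + (m : ℝ),
    fun m => ⟨fun i => mul_pos (hx i) (Real.rpow_pos_of_pos (h0 m) _), (hT _ (hT' m)).1⟩,
    h1, ht, ?_⟩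
  rw [tendsto_pi_nhds]
  intro i
  have hl : Filter.Tendsto (fun m : ℕ => Real.log (x i) / Real.log (T + (m : ℝ)) + v i)
      Filter.atTop (nhds (0 + v i)) :=
    ((Real.tendsto_log_atTop.comp ht).const_div_atTop _).add_const _
  rw [zero_add] at hl
  refine hl.congr fun m => ?_
  have hlog := Real.log_pos (h1 m)
  rw [Real.log_mul (hx i).ne' (Real.rpow_pos_of_pos (h0 m) _).ne', Real.log_rpow (h0 m),
    add_div, mul_div_cancel_right₀ _ hlog.ne']
end

section
/- Let f₁, …, f_k be signomials on ℝⁿ_{>0} and set S(f₁, …, f_k) = ⋂_{i=1}^{k} f_i^{-1}(ℝ_{<0}). Then the real tropicalization is contained in the intersection of the negative normal cones: Trop(S(f₁, …, f_k)) ⊆ ⋂_{i=1}^{k} N_{f_i}^-. -/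
namespace Signomial

lemma aux_mono {n : ℕ} (x μ : Fin n → ℝ) (L : ℝ) (hL : L ≠ 0) (hx : ∀ i, 0 < x i) :
    mono x μ = Real.exp (L * dot (fun i => Real.log (x i) / L) μ) := by
  unfold mono dot
  rw [Finset.mul_sum, Real.exp_sum]
  refine Finset.prod_congr rfl fun i _ => ?_
  rw [Real.rpow_def_of_pos (hx i)]
  congr 1
  field_simp

lemma aux_face {n : ℕ} (f : Signomial n) (w μ : Fin n → ℝ) (hμ : μ ∈ f.supp)
    (h : ∀ ν ∈ f.supp, dot w ν ≤ dot w μ) : μ ∈ f.faceAt w := by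
  refine ⟨subset_convexHull ℝ _ hμ, fun ν hν => ?_⟩
  have hc : Convex ℝ {ν : Fin n → ℝ | dot w ν ≤ dot w μ} := by
    refine convex_halfSpace_le (f := dot w) ⟨fun a b => ?_, fun c a => ?_⟩ _
    · simp [dot, mul_add, Finset.sum_add_distrib]
    · simp only [dot, Pi.smul_apply, smul_eq_mul, Finset.mul_sum]
      exact Finset.sum_congr rfl fun i _ => by ring
  exact convexHull_min (fun ν hν => h ν hν) hc hν

lemma aux_main {n : ℕ} (f : Signomial n) (w : Fin n → ℝ) (x : ℕ → Fin n → ℝ) (t : ℕ → ℝ)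
    (hx : ∀ m i, 0 < x m i) (hneg : ∀ m, f.eval (x m) < 0) (ht : ∀ m, 1 < t m)
    (htt : Filter.Tendsto t Filter.atTop Filter.atTop)
    (hw : Filter.Tendsto (fun m i => Real.log (x m i) / Real.log (t m))
      Filter.atTop (nhds w)) : w ∈ negCone f := by
  classical
  by_contra hcon
  have hne : f.supp.Nonempty := by
    by_contra h
    rw [Finset.not_nonempty_iff_eq_empty] at h
    have := hneg 0
    simp [eval, h] at this
  obtain ⟨μ0, hμ0, hmax⟩ := f.supp.exists_max_image (dot w) hne
  have hlt : ∀ μ ∈ f.supp, f.coeff μ < 0 → dot w μ < dot w μ0 := by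
    intro μ hμ hc
    by_contra h
    exact hcon ⟨μ, hμ, hc, aux_face f w μ hμ fun ν hν => (hmax ν hν).trans (not_lt.mp h)⟩
  have hc0 : 0 < f.coeff μ0 := by
    rcases lt_or_gt_of_ne (f.coeff_ne_zero μ0 hμ0) with h | h
    · exact absurd (hlt μ0 hμ0 h) (lt_irrefl _)
    · exact h
  have hL : ∀ m, 0 < Real.log (t m) := fun m => Real.log_pos (ht m)
  have hLt : Filter.Tendsto (fun m => Real.log (t m)) Filter.atTop Filter.atTop :=
    Real.tendsto_log_atTop.comp htt
  set u : ℕ → Fin n → ℝ := fun m i => Real.log (x m i) / Real.log (t m) with hu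
  have hdot : ∀ μ, Filter.Tendsto (fun m => dot (u m) μ) Filter.atTop (nhds (dot w μ)) := by
    intro μ
    exact tendsto_finsetSum _ fun i _ => ((tendsto_pi_nhds.mp hw i).mul_const _)
  let r : (Fin n → ℝ) → ℕ → ℝ := fun μ m =>
    Real.exp (Real.log (t m) * (dot (u m) μ - dot (u m) μ0))
  let h : (Fin n → ℝ) → ℕ → ℝ := fun μ m =>
    if μ = μ0 then f.coeff μ0 else if f.coeff μ < 0 then f.coeff μ * r μ m else 0
  have hlim : ∀ μ ∈ f.supp, Filter.Tendsto (h μ) Filter.atTop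
      (nhds (if μ = μ0 then f.coeff μ0 else 0)) := by
    intro μ hμ
    by_cases h1 : μ = μ0
    · simp [h, h1]
    by_cases h2 : f.coeff μ < 0
    · simp only [h, h1, h2, if_true, if_false]
      rw [← mul_zero (f.coeff μ)]
      refine Filter.Tendsto.const_mul _ (Real.tendsto_exp_atBot.comp ?_)
      exact hLt.atTop_mul_neg (sub_neg.mpr (hlt μ hμ h2)) ((hdot μ).sub (hdot μ0))
    · simp [h, h1, h2]
  have hsum := tendsto_finsetSum f.supp hlim
  rw [Finset.sum_ite_eq' f.supp μ0, if_pos hμ0] at hsum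
  obtain ⟨m, hm⟩ := (hsum.eventually (lt_mem_nhds hc0)).exists
  have hev : f.eval (x m) = mono (x m) μ0 * ∑ μ ∈ f.supp, f.coeff μ * r μ m := by
    unfold eval
    rw [Finset.mul_sum]
    refine Finset.sum_congr rfl fun μ _ => ?_
    rw [aux_mono _ μ _ (hL m).ne' (hx m), aux_mono _ μ0 _ (hL m).ne' (hx m)]
    simp only [r, hu]
    rw [mul_left_comm, ← Real.exp_add]
    congr 2
    ring
  have hle : ∑ μ ∈ f.supp, h μ m ≤ ∑ μ ∈ f.supp, f.coeff μ * r μ m := by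
    refine Finset.sum_le_sum fun μ _ => ?_
    by_cases h1 : μ = μ0
    · simp [h, r, h1]
    by_cases h2 : f.coeff μ < 0
    · simp [h, h1, h2]
    · simp only [h, h1, h2, if_false]
      exact mul_nonneg (not_lt.mp h2) (Real.exp_pos _).le
  have hpos : 0 < mono (x m) μ0 := Finset.prod_pos fun i _ => Real.rpow_pos_of_pos (hx m i) _
  have := hneg m
  rw [hev] at this
  exact absurd (mul_pos hpos (hm.trans_le hle)) this.not_gt

end Signomial

open Signomial in
/-- `Trop(S(f₁, …, f_k)) ⊆ ⋂ᵢ N_{fᵢ}^-`. -/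
theorem trop_subset_negCones {n k : ℕ} (f : Fin k → Signomial n) :
    trop (negSet f) ⊆ ⋂ i, negCone (f i) := by
  rintro w ⟨x, t, hx, ht, htt, hw⟩
  exact Set.mem_iInter.mpr fun i =>
    aux_main (f i) w x t (fun m => (hx m).1) (fun m => (hx m).2 i) ht htt hw
end

section
/- Let f be a maximally sparse signomial on ℝⁿ_{>0}, i.e. every exponent vector in the support σ(f) is a vertex of the Newton polytope N(f). Then Trop(S(f)) = N_f^-, where S(f) = f^{-1}(ℝ_{<0}). -/
namespace Signomial

theorem aux_mono_exp {n : ℕ} (y μ : Fin n → ℝ) :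
    mono (fun i => Real.exp (y i)) μ = Real.exp (dot y μ) := by
  unfold mono dot
  rw [Real.exp_sum]
  exact Finset.prod_congr rfl fun i _ => (Real.exp_mul _ _).symm

theorem aux_eval_exp {n : ℕ} (f : Signomial n) (y μ : Fin n → ℝ) :
    f.eval (fun i => Real.exp (y i)) = Real.exp (dot y μ) *
      ∑ ν ∈ f.supp, f.coeff ν * Real.exp (dot y ν - dot y μ) := by
  unfold eval
  rw [Finset.mul_sum]
  refine Finset.sum_congr rfl fun ν _ => ?_
  rw [aux_mono_exp, Real.exp_sub]
  field_simp

theorem aux_dot_lin {n : ℕ} (v : Fin n → ℝ) : IsLinearMap ℝ (dot v) := by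
  constructor
  · intro a b
    simp [dot, mul_add, Finset.sum_add_distrib]
  · intro c a
    simp only [dot, Pi.smul_apply, smul_eq_mul, Finset.mul_sum]
    exact Finset.sum_congr rfl fun i _ => by ring

theorem aux_mem_faceAt {n : ℕ} (f : Signomial n) (v μ : Fin n → ℝ) (hμ : μ ∈ f.supp)
    (h : ∀ ν ∈ f.supp, dot v ν ≤ dot v μ) : μ ∈ f.faceAt v := by
  refine ⟨subset_convexHull ℝ _ hμ, fun ν hν => ?_⟩
  exact convexHull_min (t := {w | dot v w ≤ dot v μ}) (fun w hw => h w hw)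
    (convex_halfSpace_le (aux_dot_lin v) _) hν

theorem aux_sub {n : ℕ} (f : Signomial n) : trop (negSet₁ f) ⊆ negCone f := by
  rintro w ⟨x, t, hx, ht, htt, hlim⟩
  by_contra hw
  have hne : f.supp.Nonempty := by
    rw [Finset.nonempty_iff_ne_empty]
    intro h
    have := (hx 0).2
    simp [eval, h] at this
  obtain ⟨μ, hμ, hmax⟩ := f.supp.exists_max_image (dot w) hne
  have hneg : ∀ ν ∈ f.supp, f.coeff ν < 0 → dot w ν < dot w μ := by
    intro ν hν hc
    by_contra hlt
    push Not at hlt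
    exact hw ⟨ν, hν, hc, aux_mem_faceAt f w ν hν fun κ hκ => (hmax κ hκ).trans hlt⟩
  have hc0 : 0 < f.coeff μ := by
    rcases lt_or_gt_of_ne (f.coeff_ne_zero μ hμ) with h | h
    · exact absurd (hneg μ hμ h) (lt_irrefl _)
    · exact h
  set L : ℕ → ℝ := fun m => Real.log (t m) with hL
  have hLpos : ∀ m, 0 < L m := fun m => Real.log_pos (ht m)
  have hLt : Filter.Tendsto L Filter.atTop Filter.atTop := Real.tendsto_log_atTop.comp htt
  set y : ℕ → Fin n → ℝ := fun m i => Real.log (x m i) with hy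
  have hxy : ∀ m, x m = fun i => Real.exp (y m i) := fun m => by
    ext i
    exact (Real.exp_log ((hx m).1 i)).symm
  have hdot : ∀ ν, Filter.Tendsto (fun m => dot (fun i => y m i / L m) ν) Filter.atTop
      (nhds (dot w ν)) := by
    intro ν
    unfold dot
    exact tendsto_finsetSum _ fun i _ => ((tendsto_pi_nhds.1 hlim) i).mul_const _
  have hdiv : ∀ m ν, dot (y m) ν = L m * dot (fun i => y m i / L m) ν := by
    intro m ν
    unfold dot
    rw [Finset.mul_sum]
    refine Finset.sum_congr rfl fun i _ => ?_
    have := (hLpos m).ne'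
    field_simp
  have hev : ∀ ν ∈ f.supp, ∃ b : ℕ → ℝ, Filter.Tendsto b Filter.atTop
      (nhds (if ν = μ then f.coeff μ else 0)) ∧
      ∀ m, b m ≤ f.coeff ν * Real.exp (dot (y m) ν - dot (y m) μ) := by
    intro ν hν
    by_cases h : ν = μ
    · subst h
      exact ⟨fun _ => f.coeff ν, by simp, by simp⟩
    · simp only [h, if_false]
      rcases lt_or_ge (f.coeff ν) 0 with hc | hc
      · refine ⟨_, ?_, fun m => le_rfl⟩
        have h1 : Filter.Tendsto (fun m => dot (y m) ν - dot (y m) μ) Filter.atTop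
            Filter.atBot := by
          have h2 := ((hdot ν).sub (hdot μ))
          have h3 := hLt.atTop_mul_neg (sub_neg.2 (hneg ν hν hc)) h2
          refine h3.congr fun m => ?_
          rw [hdiv m ν, hdiv m μ]
          ring
        have h4 := (Real.tendsto_exp_atBot.comp h1).const_mul (f.coeff ν)
        simpa using h4
      · exact ⟨fun _ => 0, tendsto_const_nhds, fun m => by positivity⟩
  choose! b hb hb' using hev
  have hsum := tendsto_finsetSum f.supp hb
  rw [Finset.sum_ite_eq' f.supp μ, if_pos hμ] at hsum
  obtain ⟨m, hm⟩ := (hsum.eventually (lt_mem_nhds hc0)).exists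
  have h5 := (hx m).2
  rw [hxy m, aux_eval_exp f (y m) μ] at h5
  have h6 : 0 < ∑ ν ∈ f.supp, f.coeff ν * Real.exp (dot (y m) ν - dot (y m) μ) :=
    hm.trans_le (Finset.sum_le_sum fun ν hν => hb' ν hν m)
  have := mul_pos (Real.exp_pos (dot (y m) μ)) h6
  linarith

theorem aux_sup {n : ℕ} (f : Signomial n)
    (hms : ∀ μ ∈ f.supp, ∃ v : Fin n → ℝ, f.faceAt v = {μ}) :
    negCone f ⊆ trop (negSet₁ f) := by
  rintro v ⟨μ, hμ, hc, hface⟩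
  obtain ⟨u, hu⟩ := hms μ hμ
  have hv : ∀ ν ∈ f.supp, dot v ν ≤ dot v μ := fun ν hν =>
    hface.2 ν (subset_convexHull ℝ _ hν)
  have huμ : ∀ ν ∈ f.supp, dot u ν ≤ dot u μ := fun ν hν => by
    have : μ ∈ f.faceAt u := by rw [hu]; rfl
    exact this.2 ν (subset_convexHull ℝ _ hν)
  have hlt : ∀ ν ∈ f.supp, ν ≠ μ → dot u ν < dot u μ := by
    intro ν hν hne
    by_contra h
    push Not at h
    have h1 := aux_mem_faceAt f u ν hν fun κ hκ => (huμ κ hκ).trans h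
    rw [hu] at h1
    exact hne h1
  set s : ℕ → ℝ := fun m => (m : ℝ) + 1 with hs
  have hspos : ∀ m, 0 < s m := fun m => by positivity
  have hst : Filter.Tendsto s Filter.atTop Filter.atTop :=
    Filter.tendsto_atTop_add_const_right _ _ tendsto_natCast_atTop_atTop
  set y : ℕ → Fin n → ℝ := fun m i => s m ^ 2 * v i + s m * u i with hy
  have hdot : ∀ m ν, dot (y m) ν = s m ^ 2 * dot v ν + s m * dot u ν := by
    intro m ν
    unfold dot
    rw [Finset.mul_sum, Finset.mul_sum, ← Finset.sum_add_distrib]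
    exact Finset.sum_congr rfl fun i _ => by simp only [hy]; ring
  have hlim : ∀ ν ∈ f.supp, Filter.Tendsto
      (fun m => f.coeff ν * Real.exp (dot (y m) ν - dot (y m) μ)) Filter.atTop
      (nhds (if ν = μ then f.coeff μ else 0)) := by
    intro ν hν
    by_cases h : ν = μ
    · subst h
      simp
    · simp only [h, if_false]
      have h1 : Filter.Tendsto (fun m => dot (y m) ν - dot (y m) μ) Filter.atTop
          Filter.atBot := by
        have h3 := hst.atTop_mul_const_of_neg (sub_neg.2 (hlt ν hν h))
        refine Filter.tendsto_atBot_mono (fun m => ?_) h3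
        rw [hdot, hdot]
        have := mul_le_mul_of_nonneg_left (hv ν hν) (sq_nonneg (s m))
        linarith
      have h4 := (Real.tendsto_exp_atBot.comp h1).const_mul (f.coeff ν)
      simpa using h4
  have hsum := tendsto_finsetSum f.supp hlim
  rw [Finset.sum_ite_eq' f.supp μ, if_pos hμ] at hsum
  obtain ⟨N, hN⟩ := Filter.eventually_atTop.1 (hsum.eventually (gt_mem_nhds hc))
  have hsh : Filter.Tendsto (fun m : ℕ => m + N) Filter.atTop Filter.atTop :=
    Filter.tendsto_add_atTop_nat N
  refine ⟨fun m i => Real.exp (y (m + N) i), fun m => Real.exp (s (m + N) ^ 2), ?_, ?_, ?_, ?_⟩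
  · intro m
    refine ⟨fun i => Real.exp_pos _, ?_⟩
    rw [aux_eval_exp f (y (m + N)) μ]
    exact mul_neg_of_pos_of_neg (Real.exp_pos _) (hN _ (Nat.le_add_left _ _))
  · intro m
    have := hspos (m + N)
    exact Real.one_lt_exp_iff.2 (by positivity)
  · exact Real.tendsto_exp_atTop.comp
      ((Filter.tendsto_pow_atTop two_ne_zero).comp (hst.comp hsh))
  · rw [tendsto_pi_nhds]
    intro i
    have h1 : Filter.Tendsto (fun m => v i + u i / s (m + N)) Filter.atTop (nhds (v i + 0)) :=
      tendsto_const_nhds.add ((hst.comp hsh).const_div_atTop (u i))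
    rw [add_zero] at h1
    refine h1.congr fun m => ?_
    have := (hspos (m + N)).ne'
    simp only [Real.log_exp, hy]
    field_simp

end Signomial

open Signomial in
/-- For a maximally sparse signomial `f` (every exponent vector of `f` is
a vertex of `N(f)`), the real tropicalization of `S(f) = f⁻¹(ℝ_{<0})` equals the
negative normal cone `N_f^-`. -/
theorem trop_eq_negCone_of_maxSparse {n : ℕ} (f : Signomial n)
    (hms : ∀ μ ∈ f.supp, ∃ v : Fin n → ℝ, f.faceAt v = {μ}) :
    trop (negSet₁ f) = negCone f := by
  exact Set.Subset.antisymm (aux_sub f) (aux_sup f hms)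
end

section
/- Let f be a maximally sparse signomial on ℝⁿ_{>0}, i.e. every exponent vector in the support σ(f) is a vertex of the Newton polytope N(f). Then the negative normal cone N_f^- is regular, i.e. N_f^- equals the closure of its interior. -/
namespace Signomial

theorem dot_continuous_left {n : ℕ} (μ : Fin n → ℝ) :
    Continuous (fun v : Fin n → ℝ => dot v μ) := by
  unfold dot; fun_prop

theorem mem_faceAt_iff {n : ℕ} (f : Signomial n) (v μ : Fin n → ℝ) (hμ : μ ∈ f.supp) :
    μ ∈ f.faceAt v ↔ ∀ ν ∈ f.supp, dot v ν ≤ dot v μ := by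
  constructor
  · intro h ν hν
    exact h.2 ν (subset_convexHull ℝ _ hν)
  · intro h
    refine ⟨subset_convexHull ℝ _ hμ, fun ν hν => ?_⟩
    have hlin : IsLinearMap ℝ (fun ν : Fin n → ℝ => dot v ν) := by
      constructor
      · intro x y
        simp [dot, mul_add, Finset.sum_add_distrib]
      · intro c x
        simp only [dot, Pi.smul_apply, smul_eq_mul, Finset.mul_sum]
        exact Finset.sum_congr rfl fun i _ => by ring
    exact convexHull_min (t := {ν | dot v ν ≤ dot v μ}) (fun x hx => h x hx)
      (convex_halfSpace_le hlin _) hν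

theorem negCone_isClosed {n : ℕ} (f : Signomial n) : IsClosed (negCone f) := by
  have : negCone f = ⋃ μ ∈ {μ | μ ∈ f.supp ∧ f.coeff μ < 0},
      ⋂ ν ∈ f.supp, {v | dot v ν ≤ dot v μ} := by
    ext v
    simp only [negCone, Set.mem_setOf_eq, Set.mem_iUnion, Set.mem_iInter, exists_prop]
    constructor
    · rintro ⟨μ, h1, h2, h3⟩
      exact ⟨μ, ⟨h1, h2⟩, (mem_faceAt_iff f v μ h1).1 h3⟩
    · rintro ⟨μ, ⟨h1, h2⟩, h3⟩
      exact ⟨μ, h1, h2, (mem_faceAt_iff f v μ h1).2 h3⟩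
  rw [this]
  refine Set.Finite.isClosed_biUnion (f.supp.finite_toSet.subset fun μ h => h.1) ?_
  intro μ _
  exact isClosed_biInter fun ν _ =>
    isClosed_le (dot_continuous_left ν) (dot_continuous_left μ)

theorem mem_interior_of_strict {n : ℕ} (f : Signomial n) (v μ : Fin n → ℝ) (hμ : μ ∈ f.supp)
    (hc : f.coeff μ < 0) (h : ∀ ν ∈ f.supp, ν ≠ μ → dot v ν < dot v μ) :
    v ∈ interior (negCone f) := by
  rw [mem_interior_iff_mem_nhds]
  have : ∀ᶠ u in nhds v, ∀ ν ∈ f.supp, dot u ν ≤ dot u μ := by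
    rw [Filter.eventually_all_finset]
    intro ν hν
    by_cases hne : ν = μ
    · subst hne; simp
    · filter_upwards [(isOpen_lt (dot_continuous_left ν) (dot_continuous_left μ)).mem_nhds
        (h ν hν hne)] with u hu using le_of_lt hu
  filter_upwards [this] with u hu
  exact ⟨μ, hμ, hc, (mem_faceAt_iff f u μ hμ).2 hu⟩

end Signomial

open Signomial in
/-- For a maximally sparse signomial `f` (every exponent vector of `f` is
a vertex of `N(f)`), the negative normal cone `N_f^-` is regular: it equals the closure
of its interior. -/
theorem negCone_regular_of_maxSparse {n : ℕ} (f : Signomial n)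
    (hms : ∀ μ ∈ f.supp, ∃ v : Fin n → ℝ, f.faceAt v = {μ}) :
    negCone f = closure (interior (negCone f)) := by
  apply Set.Subset.antisymm
  · rintro v ⟨μ, hμ, hc, hv⟩
    obtain ⟨w, hw⟩ := hms μ hμ
    have hv' := (mem_faceAt_iff f v μ hμ).1 hv
    have hμw : μ ∈ f.faceAt w := by rw [hw]; rfl
    have hw' := (mem_faceAt_iff f w μ hμ).1 hμw
    have hcont : Continuous (fun t : ℝ => v + t • w) := by fun_prop
    have ht : Filter.Tendsto (fun t : ℝ => v + t • w) (nhdsWithin 0 (Set.Ioi 0)) (nhds v) := by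
      have := (hcont.tendsto 0).mono_left (nhdsWithin_le_nhds (s := Set.Ioi 0))
      simpa using this
    refine mem_closure_of_tendsto ht ?_
    filter_upwards [self_mem_nhdsWithin] with t ht0
    have ht0' : 0 < t := ht0
    refine mem_interior_of_strict f _ μ hμ hc fun ν hν hne => ?_
    have hadd : ∀ x, dot (v + t • w) x = dot v x + t * dot w x := by
      intro x
      simp only [dot, Pi.add_apply, Pi.smul_apply, smul_eq_mul, Finset.mul_sum,
        ← Finset.sum_add_distrib]
      exact Finset.sum_congr rfl fun i _ => by ring
    have hlt : dot w ν < dot w μ := by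
      refine lt_of_le_of_ne (hw' ν hν) fun heq => hne ?_
      have : ν ∈ f.faceAt w := (mem_faceAt_iff f w ν hν).2 fun x hx => heq ▸ hw' x hx
      rw [hw] at this
      exact this
    rw [hadd, hadd]
    exact add_lt_add_of_le_of_lt (hv' ν hν) (mul_lt_mul_of_pos_left hlt ht0')
  · exact closure_minimal interior_subset (negCone_isClosed f)
end

section
/- Let f₁, …, f_k be signomials on ℝⁿ_{>0} and set S(f₁, …, f_k) = ⋂_{i=1}^{k} f_i^{-1}(ℝ_{<0}). If the set ⋂_{i=1}^{k} N_{f_i}^- is regular, i.e. it equals the closure of its interior, then Trop(S(f₁, …, f_k)) = ⋂_{i=1}^{k} N_{f_i}^-. -/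
namespace Signomial

variable {n : ℕ}

theorem aux_dot_tendsto {α : Type*} {l : Filter α} {u : α → Fin n → ℝ} {w : Fin n → ℝ}
    (hu : Filter.Tendsto u l (nhds w)) (μ : Fin n → ℝ) :
    Filter.Tendsto (fun a => dot (u a) μ) l (nhds (dot w μ)) := by
  have hc : Continuous (fun v : Fin n → ℝ => dot v μ) := by
    unfold dot; fun_prop
  exact (hc.tendsto w).comp hu

theorem aux_mono_eq {x : Fin n → ℝ} (hx : x ∈ posOrth n) (μ : Fin n → ℝ) :
    mono x μ = Real.exp (dot (fun i => Real.log (x i)) μ) := by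
  unfold mono dot
  rw [Real.exp_sum]
  refine Finset.prod_congr rfl fun i _ => ?_
  rw [Real.rpow_def_of_pos (hx i)]

theorem aux_dot_smul (L : ℝ) (u μ : Fin n → ℝ) : dot (fun i => L * u i) μ = L * dot u μ := by
  unfold dot
  rw [Finset.mul_sum]
  exact Finset.sum_congr rfl fun i _ => by ring

theorem aux_pos {α : Type*} {l : Filter α} {u : α → Fin n → ℝ} {w : Fin n → ℝ} {L : α → ℝ}
    (hu : Filter.Tendsto u l (nhds w)) (hL : Filter.Tendsto L l Filter.atTop)
    (s : Finset (Fin n → ℝ)) (c : (Fin n → ℝ) → ℝ) (μ0 : Fin n → ℝ) (h0 : μ0 ∈ s)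
    (hc0 : 0 < c μ0) (hneg : ∀ μ ∈ s, c μ < 0 → dot w μ < dot w μ0) :
    ∀ᶠ a in l, 0 < ∑ μ ∈ s, c μ * Real.exp (L a * dot (u a) μ) := by
  classical
  let d : (Fin n → ℝ) → α → ℝ := fun μ a =>
    if c μ < 0 then c μ * Real.exp (L a * (dot (u a) μ - dot (u a) μ0))
    else if μ = μ0 then c μ0 else 0
  have hd : ∀ μ ∈ s, Filter.Tendsto (d μ) l (nhds (if μ = μ0 then c μ0 else 0)) := by
    intro μ hμ
    by_cases hn : c μ < 0
    · have hne : μ ≠ μ0 := by rintro rfl; linarith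
      simp only [d, if_pos hn, if_neg hne]
      have h1 : Filter.Tendsto (fun a => dot (u a) μ - dot (u a) μ0) l
          (nhds (dot w μ - dot w μ0)) := (aux_dot_tendsto hu μ).sub (aux_dot_tendsto hu μ0)
      have h2 := hL.atTop_mul_neg (sub_neg.2 (hneg μ hμ hn)) h1
      simpa using (Real.tendsto_exp_atBot.comp h2).const_mul (c μ)
    · simp only [d, if_neg hn]
      exact tendsto_const_nhds
  have hsum := tendsto_finsetSum s hd
  rw [Finset.sum_ite_eq' s μ0 (fun _ => c μ0), if_pos h0] at hsum
  filter_upwards [hsum.eventually (lt_mem_nhds hc0)] with a ha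
  have hE : ∑ μ ∈ s, c μ * Real.exp (L a * dot (u a) μ) =
      Real.exp (L a * dot (u a) μ0) *
        ∑ μ ∈ s, c μ * Real.exp (L a * (dot (u a) μ - dot (u a) μ0)) := by
    rw [Finset.mul_sum]
    refine Finset.sum_congr rfl fun μ _ => ?_
    have : L a * dot (u a) μ = L a * dot (u a) μ0 + L a * (dot (u a) μ - dot (u a) μ0) := by ring
    rw [this, Real.exp_add]; ring
  rw [hE]
  refine mul_pos (Real.exp_pos _) (lt_of_lt_of_le ha ?_)
  refine Finset.sum_le_sum fun μ _ => ?_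
  by_cases hn : c μ < 0
  · simp only [d, if_pos hn]; exact le_rfl
  · simp only [d, if_neg hn]
    split_ifs with h
    · subst h; simp
    · exact mul_nonneg (not_lt.1 hn) (Real.exp_pos _).le

theorem aux_mem_negCone (f : Signomial n) (v : Fin n → ℝ) :
    v ∈ negCone f ↔ ∃ μ ∈ f.supp, f.coeff μ < 0 ∧ ∀ ν ∈ f.supp, dot v ν ≤ dot v μ := by
  constructor
  · rintro ⟨μ, h1, h2, h3⟩
    exact ⟨μ, h1, h2, fun ν hν => h3.2 ν (subset_convexHull ℝ _ hν)⟩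
  · rintro ⟨μ, h1, h2, h3⟩
    refine ⟨μ, h1, h2, subset_convexHull ℝ _ h1, fun ν hν => ?_⟩
    have hlin : IsLinearMap ℝ (fun ν : Fin n → ℝ => dot v ν) := by
      constructor
      · intro x y; simp [dot, mul_add, Finset.sum_add_distrib]
      · intro r x
        simp only [dot, Pi.smul_apply, smul_eq_mul, Finset.mul_sum]
        exact Finset.sum_congr rfl fun i _ => by ring
    exact convexHull_min (s := (f.supp : Set (Fin n → ℝ))) (t := {ν | dot v ν ≤ dot v μ})
      (fun ν hν => h3 ν hν) (convex_halfSpace_le hlin _) hν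

theorem aux_dense (d : Fin n → ℝ) (hd : d ≠ 0) :
    IsOpen {v : Fin n → ℝ | dot v d ≠ 0} ∧ Dense {v : Fin n → ℝ | dot v d ≠ 0} := by
  have hc : Continuous (fun v : Fin n → ℝ => dot v d) := by
    unfold dot; fun_prop
  refine ⟨isOpen_ne_fun hc continuous_const, fun v => ?_⟩
  by_cases hv : dot v d ≠ 0
  · exact subset_closure hv
  push Not at hv
  have hdd : 0 < dot d d := by
    obtain ⟨i, hi⟩ := Function.ne_iff.1 hd
    exact Finset.sum_pos' (fun i _ => mul_self_nonneg _) ⟨i, Finset.mem_univ _, mul_self_pos.2 hi⟩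
  refine mem_closure_of_tendsto (f := fun m : ℕ => v + (1 / ((m : ℝ) + 1)) • d)
    (b := Filter.atTop) ?_ (Filter.Eventually.of_forall fun m => ?_)
  · simpa using (tendsto_one_div_add_atTop_nhds_zero_nat (𝕜 := ℝ)).smul_const d |>.const_add v
  · have : dot (v + (1 / ((m : ℝ) + 1)) • d) d = dot v d + (1 / ((m : ℝ) + 1)) * dot d d := by
      simp only [dot, Pi.add_apply, Pi.smul_apply, smul_eq_mul, Finset.mul_sum,
        ← Finset.sum_add_distrib]
      exact Finset.sum_congr rfl fun i _ => by ring
    simp only [Set.mem_setOf_eq, this, hv, zero_add]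
    positivity

theorem aux_dot_sub (v a b : Fin n → ℝ) : dot v (a - b) = dot v a - dot v b := by
  simp [dot, mul_sub, Finset.sum_sub_distrib]

theorem aux_generic {k : ℕ} (f : Fin k → Signomial n) :
    Dense {v : Fin n → ℝ | ∀ i, ∀ μ ∈ (f i).supp, ∀ ν ∈ (f i).supp, μ ≠ ν → dot v μ ≠ dot v ν} := by
  classical
  let T : Set (Fin n → ℝ) :=
    ⋃ i, (fun p : (Fin n → ℝ) × (Fin n → ℝ) => p.1 - p.2) ''
      (((f i).supp : Set (Fin n → ℝ)) ×ˢ ((f i).supp : Set (Fin n → ℝ)))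
  have hT : T.Finite := Set.finite_iUnion fun i =>
    (((f i).supp.finite_toSet).prod ((f i).supp.finite_toSet)).image _
  have h := dense_biInter_of_isOpen (S := T \ {0}) (f := fun d => {v : Fin n → ℝ | dot v d ≠ 0})
    (fun d hd => (aux_dense d hd.2).1) (hT.subset Set.diff_subset).countable
    (fun d hd => (aux_dense d hd.2).2)
  refine h.mono fun v hv i μ hμ ν hν hne => ?_
  have := Set.mem_iInter₂.1 hv (μ - ν)
    ⟨Set.mem_iUnion.2 ⟨i, (μ, ν), ⟨hμ, hν⟩, rfl⟩, sub_ne_zero.2 hne⟩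
  simp only [Set.mem_setOf_eq, aux_dot_sub] at this
  exact sub_ne_zero.1 this

theorem aux_trop_subset {k : ℕ} (f : Fin k → Signomial n) :
    trop (negSet f) ⊆ ⋂ i, negCone (f i) := by
  rintro w ⟨x, t, hx, ht, htt, hlim⟩
  refine Set.mem_iInter.2 fun i => ?_
  by_contra hw
  rw [aux_mem_negCone] at hw
  push Not at hw
  have hL := Real.tendsto_log_atTop.comp htt
  have hne : (f i).supp.Nonempty := by
    by_contra he
    have h0 := (hx 0).2 i
    simp [eval, Finset.not_nonempty_iff_eq_empty.1 he] at h0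
  obtain ⟨μ0, h0, hmax⟩ := Finset.exists_max_image (f i).supp (fun μ => dot w μ) hne
  have hlt : ∀ μ ∈ (f i).supp, (f i).coeff μ < 0 → dot w μ < dot w μ0 := by
    intro μ hμ hc
    obtain ⟨ν, hν, h⟩ := hw μ hμ hc
    exact h.trans_le (hmax ν hν)
  have hc0 : 0 < (f i).coeff μ0 := by
    rcases lt_or_gt_of_ne ((f i).coeff_ne_zero μ0 h0) with h | h
    · exact absurd (hlt μ0 h0 h) (lt_irrefl _)
    · exact h
  obtain ⟨m, hm⟩ := (aux_pos hlim hL (f i).supp (f i).coeff μ0 h0 hc0 hlt).exists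
  have hneg := (hx m).2 i
  have : (f i).eval (x m) = ∑ μ ∈ (f i).supp, (f i).coeff μ *
      Real.exp ((Real.log ∘ t) m * dot (fun i => Real.log (x m i) / Real.log (t m)) μ) := by
    refine Finset.sum_congr rfl fun μ _ => ?_
    rw [aux_mono_eq (hx m).1, ← aux_dot_smul]
    congr 3
    funext j
    have := Real.log_pos (ht m)
    simp only [Function.comp]
    field_simp
  linarith

theorem aux_point {k : ℕ} (f : Fin k → Signomial n) (v : Fin n → ℝ)
    (hv : v ∈ ⋂ i, negCone (f i))
    (hg : ∀ i, ∀ μ ∈ (f i).supp, ∀ ν ∈ (f i).supp, μ ≠ ν → dot v μ ≠ dot v ν) :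
    ∀ᶠ L : ℝ in Filter.atTop, (fun j => Real.exp (L * v j)) ∈ negSet f := by
  have hi : ∀ i, ∀ᶠ L : ℝ in Filter.atTop, (f i).eval (fun j => Real.exp (L * v j)) < 0 := by
    intro i
    obtain ⟨μ0, h0, hc, hmax⟩ := (aux_mem_negCone _ _).1 (Set.mem_iInter.1 hv i)
    have := aux_pos (l := Filter.atTop) (L := fun L : ℝ => L) (u := fun _ => v)
      tendsto_const_nhds Filter.tendsto_id (f i).supp (fun μ => -(f i).coeff μ) μ0 h0
      (by simpa using hc) (fun μ hμ hcμ => lt_of_le_of_ne (hmax μ hμ)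
        (hg i μ hμ μ0 h0 (by rintro rfl; linarith)))
    filter_upwards [this] with L hL
    have hE : (f i).eval (fun j => Real.exp (L * v j)) =
        ∑ μ ∈ (f i).supp, (f i).coeff μ * Real.exp (L * dot v μ) := by
      refine Finset.sum_congr rfl fun μ _ => ?_
      rw [aux_mono_eq (fun j => Real.exp_pos _), ← aux_dot_smul]
      simp only [Real.log_exp]
    simp only [neg_mul, Finset.sum_neg_distrib] at hL
    linarith
  filter_upwards [Filter.eventually_all.2 hi] with L hL
  exact ⟨fun j => Real.exp_pos _, hL⟩

end Signomial

open Signomial in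
/-- If `⋂ᵢ N_{fᵢ}^-` is regular (equals the closure of its interior),
then `Trop(S(f₁, …, f_k)) = ⋂ᵢ N_{fᵢ}^-`. -/
theorem trop_eq_negCones_of_regular {n k : ℕ} (f : Fin k → Signomial n)
    (hreg : (⋂ i, negCone (f i)) = closure (interior (⋂ i, negCone (f i)))) :
    trop (negSet f) = ⋂ i, negCone (f i) := by
  refine Set.Subset.antisymm (aux_trop_subset f) fun w hw => ?_
  rw [hreg] at hw
  have hw2 := closure_mono ((aux_generic f).open_subset_closure_inter isOpen_interior) hw
  rw [closure_closure] at hw2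
  obtain ⟨v, hv, hlim⟩ := mem_closure_iff_seq_limit.1 hw2
  have hL : ∀ m : ℕ, ∃ L : ℝ, (m : ℝ) + 1 ≤ L ∧ (fun j => Real.exp (L * v m j)) ∈ negSet f :=
    fun m => ((Filter.eventually_ge_atTop _).and
      (aux_point f (v m) (interior_subset (hv m).1) (hv m).2)).exists
  choose L hL1 hL2 using hL
  have hpos : ∀ m, 0 < L m := fun m => lt_of_lt_of_le (by positivity) (hL1 m)
  refine ⟨fun m j => Real.exp (L m * v m j), fun m => Real.exp (L m), hL2,
    fun m => Real.one_lt_exp_iff.2 (hpos m), ?_, ?_⟩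
  · refine Real.tendsto_exp_atTop.comp (Filter.tendsto_atTop_mono hL1 ?_)
    exact Filter.tendsto_atTop_add_const_right _ _ tendsto_natCast_atTop_atTop
  · convert hlim using 1
    funext m j
    have := hpos m
    simp only [Real.log_exp]
    field_simp
end
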